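/- arXiv:1708.00351 — 2 statements merged into one kernel-verified Lean document; each statement's English description precedes it below -/
import Mathlib

section
/- Let φ : X → [-∞, 0] be a measurable function with φ > -∞ μ-almost everywhere. Then the function c ↦ ∫_X F(φ(x) + c, x) dμ(x) is nondecreasing and continuous on ℝ, and satisfies ∫_X F(φ(x) + c, x) dμ(x) ≤ ∫_X F(c, x) dμ(x) < +∞ for every c ∈ ℝ. -/
/-!
Since `φ ≤ 0` and `F` is nonnegative and nondecreasing in `t`, the integrand
`F (φ x + c) x` lies between `0` and `F c x`. This gives integrability and the upper bound, and
monotonicity in `c` is pointwise. Continuity at `c₀` follows from dominated convergence, with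
the majorant `F (c₀ + 1)` valid for all `c ≤ c₀ + 1`.
-/

open MeasureTheory Filter Topology

/-- for a measurable `φ : X → [-∞, 0]` (an `EReal`-valued function) with
`φ > -∞` μ-a.e., the function `c ↦ ∫_X F(φ(x) + c, x) dμ(x)` — where `F(φ(x)+c, x)` is
interpreted as `0` on the null set `{φ = -∞}` — is nondecreasing and continuous on `ℝ`,
and for every `c` the integrand is integrable with
`∫_X F(φ(x)+c, x) dμ ≤ ∫_X F(c, x) dμ < +∞`. -/
theorem shifted_integral_monotone_continuous_le
    {X : Type*} [MeasurableSpace X] (μ : Measure X) [IsFiniteMeasure μ]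
    (F : ℝ → X → ℝ)
    (hF_meas : Measurable (Function.uncurry F))
    (hF_nonneg : ∀ t x, 0 ≤ F t x)
    (hF_cont : ∀ x, Continuous fun t => F t x)
    (hF_mono : ∀ x, Monotone fun t => F t x)
    (hF_int : ∀ t : ℝ, Integrable (F t) μ)
    (φ : X → EReal) (hφ_meas : Measurable φ)
    (hφ_le : ∀ x, φ x ≤ 0)
    (hφ_fin : ∀ᵐ x ∂μ, φ x ≠ ⊥) :
    Monotone (fun c : ℝ =>
        ∫ x, (if φ x = ⊥ then 0 else F ((φ x).toReal + c) x) ∂μ) ∧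
    Continuous (fun c : ℝ =>
        ∫ x, (if φ x = ⊥ then 0 else F ((φ x).toReal + c) x) ∂μ) ∧
    ∀ c : ℝ,
      Integrable (fun x => if φ x = ⊥ then 0 else F ((φ x).toReal + c) x) μ ∧
      (∫ x, (if φ x = ⊥ then 0 else F ((φ x).toReal + c) x) ∂μ) ≤ ∫ x, F c x ∂μ := by
  have h_meas : ∀ c : ℝ,
      Measurable (fun x => if φ x = ⊥ then 0 else F ((φ x).toReal + c) x) := fun c =>
    Measurable.ite (hφ_meas (measurableSet_singleton ⊥)) measurable_const
      (hF_meas.comp ((hφ_meas.ereal_toReal.add_const c).prodMk measurable_id))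
  have h_nonneg : ∀ (c : ℝ) (x : X),
      0 ≤ (if φ x = ⊥ then 0 else F ((φ x).toReal + c) x) := by
    intro c x
    split_ifs
    exacts [le_rfl, hF_nonneg _ _]
  have h_mono : ∀ (x : X) (a b : ℝ), a ≤ b →
      (if φ x = ⊥ then 0 else F ((φ x).toReal + a) x) ≤
        (if φ x = ⊥ then 0 else F ((φ x).toReal + b) x) := by
    intro x a b hab
    split_ifs
    exacts [le_rfl, hF_mono x (by linarith)]
  have h_le : ∀ (c : ℝ) (x : X),
      (if φ x = ⊥ then 0 else F ((φ x).toReal + c) x) ≤ F c x := by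
    intro c x
    split_ifs
    · exact hF_nonneg _ _
    · exact hF_mono x (by linarith [EReal.toReal_nonpos (hφ_le x)])
  have h_int : ∀ c : ℝ,
      Integrable (fun x => if φ x = ⊥ then 0 else F ((φ x).toReal + c) x) μ := fun c =>
    (hF_int c).mono' (h_meas c).aestronglyMeasurable <| .of_forall fun x => by
      rw [Real.norm_of_nonneg (h_nonneg c x)]
      exact h_le c x
  refine ⟨fun a b hab => integral_mono (h_int a) (h_int b) fun x => h_mono x a b hab, ?_,
    fun c => ⟨h_int c, integral_mono (h_int c) (hF_int c) (h_le c)⟩⟩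
  refine continuous_iff_continuousAt.2 fun c₀ => ?_
  -- Near `c₀` one has `c ≤ c₀ + 1`, so `F (c₀ + 1)` is a local integrable majorant.
  refine continuousAt_of_dominated (bound := F (c₀ + 1))
    (.of_forall fun c => (h_meas c).aestronglyMeasurable) ?_ (hF_int _) (.of_forall fun x => ?_)
  · filter_upwards [Iic_mem_nhds (lt_add_one c₀)] with c hc
    refine .of_forall fun x => ?_
    rw [Real.norm_of_nonneg (h_nonneg c x)]
    exact (h_le c x).trans (hF_mono x hc)
  · split_ifs
    · exact continuousAt_const
    · exact ((hF_cont x).comp (continuous_const.add continuous_id)).continuousAt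
end

section
/- Let A ∈ [0, +∞) and c₀ ∈ ℝ satisfy ∫_X F(c₀, x) dμ(x) = A, and assume lim_{t→+∞} ∫_X F(t, x) dμ(x) > A. Then for every measurable function φ : X → [-∞, 0] with φ > -∞ μ-almost everywhere, there exists a real number c_φ ≥ c₀ such that ∫_X F(φ(x) + c_φ, x) dμ(x) = A. -/
/-!
Write `G c` for the integral of `F (φ x + c) x`. Since `φ ≤ 0`, the integrand is dominated by
`F c`, so `G` is finite, `G c₀ ≤ A`, and `G` is continuous by dominated convergence (with bound
`F (c + 1)` near `c`). As `φ` is finite almost everywhere, `F (φ x + c) x` eventually exceeds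
`F T x` for every fixed `T`; truncating at `F T` and using dominated convergence shows that `G`
eventually exceeds `A` once `∫ F T > A`. The intermediate value theorem gives the constant.
-/

open MeasureTheory Filter Topology

/-- if `A ∈ [0,∞)` and `c₀ ∈ ℝ` satisfy `∫ F(c₀,·) dμ = A`, and the limit
`L ∈ [0,+∞]` of `t ↦ ∫ F(t,·) dμ` as `t → +∞` (which exists by monotonicity) satisfies
`L > A`, then for every measurable `φ : X → [-∞, 0]` with `φ > -∞` μ-a.e. there exists
`c_φ ≥ c₀` with `∫_X F(φ(x) + c_φ, x) dμ(x) = A`, where `F(φ(x)+c, x)` is interpreted as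
`0` on the null set `{φ = -∞}`. -/
theorem exists_normalizing_constant_for_shift
    {X : Type*} [MeasurableSpace X] (μ : Measure X) [IsFiniteMeasure μ]
    (F : ℝ → X → ℝ)
    (hF_meas : Measurable (Function.uncurry F))
    (hF_nonneg : ∀ t x, 0 ≤ F t x)
    (hF_cont : ∀ x, Continuous fun t => F t x)
    (hF_mono : ∀ x, Monotone fun t => F t x)
    (hF_int : ∀ t : ℝ, Integrable (F t) μ)
    (A : ℝ) (hA : 0 ≤ A)
    (c₀ : ℝ) (hc₀ : ∫ x, F c₀ x ∂μ = A)
    (hlim : ∃ L : EReal,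
      Tendsto (fun t : ℝ => ((∫ x, F t x ∂μ : ℝ) : EReal)) atTop (nhds L) ∧ (A : EReal) < L) :
    ∀ φ : X → EReal, Measurable φ → (∀ x, φ x ≤ 0) → (∀ᵐ x ∂μ, φ x ≠ ⊥) →
      ∃ c : ℝ, c₀ ≤ c ∧
        ∫ x, (if φ x = ⊥ then 0 else F ((φ x).toReal + c) x) ∂μ = A := by
  intro φ hφ hφ0 hφb
  obtain ⟨L, hL, hAL⟩ := hlim
  set g : ℝ → X → ℝ := fun c x => if φ x = ⊥ then 0 else F ((φ x).toReal + c) x with hg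
  have hreal : ∀ x, (φ x).toReal ≤ 0 := fun x => EReal.toReal_nonpos (hφ0 x)
  have hg_meas : ∀ c, Measurable (g c) := fun c =>
    Measurable.ite (hφ (measurableSet_singleton ⊥)) measurable_const
      (hF_meas.comp ((hφ.ereal_toReal.add_const c).prodMk measurable_id))
  have hg_nonneg : ∀ c x, 0 ≤ g c x := by
    intro c x
    simp only [hg]
    split_ifs
    · exact le_rfl
    · exact hF_nonneg _ _
  have hg_le : ∀ c d x, c ≤ d → g c x ≤ F d x := by
    intro c d x hcd
    simp only [hg]
    split_ifs
    · exact hF_nonneg _ _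
    · exact hF_mono x (by linarith [hreal x])
  have hg_int : ∀ c, Integrable (g c) μ := fun c =>
    (hF_int c).mono' (hg_meas c).aestronglyMeasurable
      (Eventually.of_forall fun x => by
        rw [Real.norm_of_nonneg (hg_nonneg c x)]
        exact hg_le c c x le_rfl)
  have hg_cont : ∀ x, Continuous fun c => g c x := by
    intro x
    simp only [hg]
    split_ifs
    · exact continuous_const
    · exact (hF_cont x).comp (continuous_const.add continuous_id)
  have hG_cont : Continuous fun c => ∫ x, g c x ∂μ := by
    refine continuous_iff_continuousAt.2 fun c => ?_
    refine continuousAt_of_dominated (bound := F (c + 1))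
      (Eventually.of_forall fun d => (hg_meas d).aestronglyMeasurable) ?_ (hF_int _)
      (Eventually.of_forall fun x => (hg_cont x).continuousAt)
    filter_upwards [Iio_mem_nhds (lt_add_one c)] with d hd
    refine Eventually.of_forall fun x => ?_
    rw [Real.norm_of_nonneg (hg_nonneg d x)]
    exact hg_le d (c + 1) x (le_of_lt hd)
  have hG_low : ∫ x, g c₀ x ∂μ ≤ A :=
    hc₀ ▸ integral_mono (hg_int c₀) (hF_int c₀) fun x => hg_le c₀ c₀ x le_rfl
  obtain ⟨T, hT⟩ : ∃ T : ℝ, A < ∫ x, F T x ∂μ := by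
    obtain ⟨T, hT⟩ := (hL.eventually (lt_mem_nhds hAL)).exists
    exact ⟨T, EReal.coe_lt_coe_iff.1 hT⟩
  have htrunc : Tendsto (fun c : ℝ => ∫ x, min (g c x) (F T x) ∂μ) atTop
      (𝓝 (∫ x, F T x ∂μ)) := by
    refine tendsto_integral_filter_of_dominated_convergence (F T)
      (Eventually.of_forall fun c =>
        ((hg_int c).inf (hF_int T)).aestronglyMeasurable)
      (Eventually.of_forall fun c => Eventually.of_forall fun x => ?_) (hF_int T) ?_
    · rw [Real.norm_of_nonneg (le_min (hg_nonneg c x) (hF_nonneg T x))]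
      exact min_le_right _ _
    · filter_upwards [hφb] with x hx
      refine tendsto_const_nhds.congr' ?_
      filter_upwards [eventually_ge_atTop (T - (φ x).toReal)] with c hc
      refine (min_eq_right ?_).symm
      simp only [hg, if_neg hx]
      exact hF_mono x (by linarith)
  obtain ⟨c₁, hc₁, hAc₁⟩ :=
    ((eventually_ge_atTop c₀).and (htrunc.eventually (lt_mem_nhds hT))).exists
  have hG_high : A ≤ ∫ x, g c₁ x ∂μ :=
    hAc₁.le.trans (integral_mono ((hg_int c₁).inf (hF_int T)) (hg_int c₁)
      fun x => min_le_left _ _)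
  obtain ⟨c, hc, hGc⟩ := intermediate_value_Icc hc₁ hG_cont.continuousOn ⟨hG_low, hG_high⟩
  exact ⟨c, hc.1, hGc⟩
end
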